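/- (Deterministic form of the consistency theorem.) For k = 0,1, let μ̂ₙᵏ ∈ ℝ^p and symmetric positive definite p×p matrices Σ̂ₙᵏ satisfy μ̂ₙᵏ → μ_k and Σ̂ₙᵏ → Σ_k as n → ∞, and let Êₙ be the classification error function defined from (μ̂ₙ⁰, μ̂ₙ¹, Σ̂ₙ⁰, Σ̂ₙ¹) by the same formula as E. Assume E has a unique minimizing direction: there is a unit vector α₀ such that E(α₀) ≤ E(α) for all unit α, with equality only for α = ±α₀. For each n let α̂ₙ be a unit vector minimizing Êₙ over the unit sphere. Then min(‖α̂ₙ − α₀‖, ‖α̂ₙ + α₀‖) → 0 as n → ∞. -/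

import Mathlib

open MeasureTheory ProbabilityTheory Matrix Filter Set

noncomputable def Phi (t : ℝ) : ℝ := ((gaussianReal 0 1) (Set.Iic t)).toReal
noncomputable def calE (r g : ℝ) : ℝ :=
  if g = 1 then Phi (-(|r| / 2))
  else
    1/2
      + (1/2) * Phi ((r - g * Real.sqrt (r^2 + (g^2 - 1) * Real.log (g^2))) / (g^2 - 1))
      - (1/2) * Phi ((r + g * Real.sqrt (r^2 + (g^2 - 1) * Real.log (g^2))) / (g^2 - 1))
      + (1/2) * Phi ((r * g + Real.sqrt (r^2 + (g^2 - 1) * Real.log (g^2))) / (g^2 - 1))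
      - (1/2) * Phi ((r * g - Real.sqrt (r^2 + (g^2 - 1) * Real.log (g^2))) / (g^2 - 1))
noncomputable def Evec {p : ℕ} (μ0 μ1 : Fin p → ℝ) (S0 S1 : Matrix (Fin p) (Fin p) ℝ)
    (α : Fin p → ℝ) : ℝ :=
  calE ((dotProduct α μ0 - dotProduct α μ1) / Real.sqrt (dotProduct α (S1.mulVec α)))
    (Real.sqrt (dotProduct α (S0.mulVec α)) / Real.sqrt (dotProduct α (S1.mulVec α)))
noncomputable def frobNorm {p : ℕ} (M : Matrix (Fin p) (Fin p) ℝ) : ℝ :=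
  Real.sqrt (∑ i, ∑ j, (M i j)^2)

lemma Phi_sub_le {x y : ℝ} (h : x ≤ y) : Phi x ≤ Phi y ∧ Phi y - Phi x ≤ y - x := by
  have hsub : Set.Iic x ⊆ Set.Iic y := Set.Iic_subset_Iic.mpr h
  have h1 : Phi y = Phi x + ((gaussianReal 0 1) (Set.Ioc x y)).toReal := by
    unfold Phi
    rw [← ENNReal.toReal_add (measure_ne_top _ _) (measure_ne_top _ _),
      ← measure_union (by
        rw [Set.disjoint_left]; intro a ha hb; exact absurd ha (not_le.mpr hb.1)) measurableSet_Ioc,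
      Set.Iic_union_Ioc_eq_Iic h]
  have h2 : (gaussianReal 0 1) (Set.Ioc x y) ≤ ENNReal.ofReal (y - x) := by
    rw [gaussianReal_apply 0 one_ne_zero, ← Real.volume_Ioc, ← setLIntegral_one]
    apply lintegral_mono
    intro t
    simp only [gaussianPDF]
    rw [ENNReal.ofReal_le_one]
    unfold gaussianPDFReal
    have ha : (Real.sqrt (2 * Real.pi * ((1 : NNReal) : ℝ)))⁻¹ ≤ 1 := by
      apply inv_le_one_of_one_le₀
      rw [Real.one_le_sqrt]
      have := Real.pi_gt_three
      push_cast
      linarith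
    have hb : Real.exp (-(t - 0) ^ 2 / (2 * ((1 : NNReal) : ℝ))) ≤ 1 := by
      rw [Real.exp_le_one_iff]
      push_cast
      nlinarith [sq_nonneg (t - 0)]
    calc _ ≤ (1 : ℝ) * 1 := by gcongr
      _ = 1 := one_mul 1
  have h3 : ((gaussianReal 0 1) (Set.Ioc x y)).toReal ≤ y - x :=
    ENNReal.toReal_le_of_le_ofReal (by linarith) h2
  have h4 : 0 ≤ ((gaussianReal 0 1) (Set.Ioc x y)).toReal := ENNReal.toReal_nonneg
  constructor <;> linarith

lemma Phi_abs_le (x y : ℝ) : |Phi x - Phi y| ≤ |x - y| := by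
  rcases le_total x y with h | h
  · obtain ⟨a, b⟩ := Phi_sub_le h
    rw [abs_sub_comm, abs_sub_comm x, abs_of_nonneg (by linarith), abs_of_nonneg (by linarith)]
    exact b
  · obtain ⟨a, b⟩ := Phi_sub_le h
    rw [abs_of_nonneg (by linarith), abs_of_nonneg (by linarith)]
    exact b

lemma Phi_continuous : Continuous Phi := by
  have : LipschitzWith 1 Phi := LipschitzWith.of_dist_le_mul (fun x y => by
    simpa [Real.dist_eq] using Phi_abs_le x y)
  exact this.continuous

lemma Phi_neg (x : ℝ) : Phi (-x) = 1 - Phi x := by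
  have hm : (gaussianReal 0 1).map (fun y : ℝ => -y) = gaussianReal 0 1 := by
    rw [gaussianReal_map_neg]; simp
  have : NullSingletonClass (gaussianReal 0 1) := nullSingletonClass_gaussianReal one_ne_zero
  have h1 : (gaussianReal 0 1) (Set.Iic (-x)) = (gaussianReal 0 1) (Set.Ici x) := by
    conv_lhs => rw [← hm]
    rw [Measure.map_apply measurable_neg measurableSet_Iic]
    congr 1
    ext t; simp
  have h2 : (Set.Iic x)ᶜ = Set.Ioi x := Set.compl_Iic
  have h3 := prob_compl_eq_one_sub (μ := gaussianReal 0 1) (measurableSet_Iic (a := x))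
  unfold Phi
  rw [h1, ← measure_congr (Ioi_ae_eq_Ici (μ := gaussianReal 0 1)), ← h2, h3,
    ENNReal.toReal_sub_of_le prob_le_one (by simp)]
  simp

lemma calE_neg (r g : ℝ) : calE (-r) g = calE r g := by
  unfold calE
  split_ifs with h
  · rw [abs_neg]
  · rw [neg_sq]
    set D := Real.sqrt (r^2 + (g^2 - 1) * Real.log (g^2))
    rw [show (-r - g * D) / (g^2-1) = -((r + g * D) / (g^2-1)) by ring,
      show (-r + g * D) / (g^2-1) = -((r - g * D) / (g^2-1)) by ring,
      show (-r * g + D) / (g^2-1) = -((r * g - D) / (g^2-1)) by ring,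
      show (-r * g - D) / (g^2-1) = -((r * g + D) / (g^2-1)) by ring]
    simp only [Phi_neg]
    ring

lemma calE_abs (r g : ℝ) : calE |r| g = calE r g := by
  rcases abs_choice r with h | h <;> rw [h]
  exact calE_neg r g

lemma log_term_nonneg {g : ℝ} (hg : 0 < g) : 0 ≤ (g^2 - 1) * Real.log (g^2) := by
  rcases le_total 1 (g^2) with h | h
  · exact mul_nonneg (by linarith) (Real.log_nonneg h)
  · exact mul_nonneg_of_nonpos_of_nonpos (by linarith) (Real.log_nonpos (by positivity) h)

/-- Quantitative closeness of `calE` to its value at `g = 1`. -/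
lemma calE_near_zero {r g : ℝ} (hg : 0 < g) :
    |calE r g - 1/2| ≤ |r| + Real.sqrt (r^2 + (g^2 - 1) * Real.log (g^2)) := by
  have hD := Real.sqrt_nonneg (r^2 + (g^2 - 1) * Real.log (g^2))
  unfold calE
  split_ifs with h
  · have h0 : Phi 0 = 1/2 := by have := Phi_neg 0; rw [neg_zero] at this; linarith
    rw [← h0]
    refine (Phi_abs_le _ _).trans ?_
    rw [sub_zero, abs_neg, abs_of_nonneg (by positivity)]
    have := abs_nonneg r
    linarith
  · set D := Real.sqrt (r^2 + (g^2 - 1) * Real.log (g^2))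
    have hs : g^2 - 1 ≠ 0 := by
      intro h'
      apply h
      nlinarith
    have e1 := Phi_abs_le ((r - g * D) / (g^2-1)) ((r * g - D) / (g^2-1))
    have e2 := Phi_abs_le ((r * g + D) / (g^2-1)) ((r + g * D) / (g^2-1))
    have hg1 : (1 + g) ≠ 0 := by positivity
    rw [show (r - g * D) / (g^2-1) - (r * g - D) / (g^2-1) = -((r + D) / (1+g)) by
      field_simp; ring] at e1
    rw [show (r * g + D) / (g^2-1) - (r + g * D) / (g^2-1) = (r - D) / (1+g) by
      field_simp; ring] at e2
    have b1 : |(r + D) / (1 + g)| ≤ |r| + D := by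
      rw [abs_div, abs_of_pos (show 0 < 1 + g by linarith)]
      refine (div_le_self (abs_nonneg _) (by linarith)).trans ?_
      refine (abs_add_le _ _).trans ?_
      rw [abs_of_nonneg hD]
    have b2 : |(r - D) / (1 + g)| ≤ |r| + D := by
      rw [abs_div, abs_of_pos (show 0 < 1 + g by linarith)]
      refine (div_le_self (abs_nonneg _) (by linarith)).trans ?_
      refine (abs_sub _ _).trans ?_
      rw [abs_of_nonneg hD]
    rw [abs_neg] at e1
    have e1' := abs_le.mp (e1.trans b1)
    have e2' := abs_le.mp (e2.trans b2)
    rw [abs_le]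
    constructor <;> linarith [e1'.1, e1'.2, e2'.1, e2'.2]

lemma calE_near_pos {r g : ℝ} (hg : 0 < g) (hr : 0 < r) :
    |calE r g - (1/2 + 1/2 * Phi ((-r^2 - g^2 * Real.log (g^2)) /
        (r + g * Real.sqrt (r^2 + (g^2 - 1) * Real.log (g^2))))
      - 1/2 * Phi ((r^2 - Real.log (g^2)) /
        (r * g + Real.sqrt (r^2 + (g^2 - 1) * Real.log (g^2)))))|
      ≤ |r - Real.sqrt (r^2 + (g^2 - 1) * Real.log (g^2))| := by
  have hD := Real.sqrt_nonneg (r^2 + (g^2 - 1) * Real.log (g^2))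
  have hnn := log_term_nonneg hg
  have hsq := Real.sq_sqrt (show 0 ≤ r^2 + (g^2 - 1) * Real.log (g^2) by positivity)
  unfold calE
  split_ifs with h
  · subst h
    have hs : Real.sqrt (r^2) = r := Real.sqrt_sq hr.le
    simp only [one_pow, Real.log_one, mul_zero, sub_self, add_zero, hs, mul_one, one_mul, sub_zero,
      abs_zero, abs_of_pos hr]
    rw [show -r^2 / (r + r) = -(r/2) by field_simp; ring, show r^2/(r+r) = r/2 by field_simp; ring,
      Phi_neg]
    apply le_of_eq
    rw [abs_eq_zero]; ring
  · set D := Real.sqrt (r^2 + (g^2 - 1) * Real.log (g^2))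
    have hs : g^2 - 1 ≠ 0 := by
      intro h'
      apply h
      nlinarith
    have hg1 : (1 + g) ≠ 0 := by positivity
    have p1 : r + g * D ≠ 0 := by positivity
    have p2 : r * g + D ≠ 0 := by positivity
    have q1 : (r - g * D) / (g^2-1) = (-r^2 - g^2 * Real.log (g^2)) / (r + g * D) := by
      rw [div_eq_div_iff hs p1]
      linear_combination (-g^2) * hsq
    have q2 : (r * g - D) / (g^2-1) = (r^2 - Real.log (g^2)) / (r * g + D) := by
      rw [div_eq_div_iff hs p2]
      linear_combination (-1) * hsq
    have e2 := Phi_abs_le ((r * g + D) / (g^2-1)) ((r + g * D) / (g^2-1))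
    rw [show (r * g + D) / (g^2-1) - (r + g * D) / (g^2-1) = (r - D) / (1+g) by
      field_simp; ring] at e2
    have b2 : |(r - D) / (1 + g)| ≤ |r - D| := by
      rw [abs_div, abs_of_pos (show 0 < 1 + g by linarith)]
      exact div_le_self (abs_nonneg _) (by linarith)
    rw [q1, q2]
    have e2' := abs_le.mp (e2.trans b2)
    have := abs_nonneg (r - D)
    rw [abs_le]
    constructor <;> linarith [e2'.1, e2'.2]

lemma calE_cont {r g : ℝ} (hg : 0 < g) :
    Tendsto (fun q : ℝ × ℝ => calE q.1 q.2) (nhds (r, g)) (nhds (calE r g)) := by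
  have hPhi := Phi_continuous
  have hlog : ContinuousAt (fun q : ℝ × ℝ => Real.log (q.2^2)) (r, g) :=
    ContinuousAt.log (by fun_prop) (by simp [hg.ne'])
  have hΔ : ContinuousAt (fun q : ℝ × ℝ =>
      Real.sqrt (q.1^2 + (q.2^2 - 1) * Real.log (q.2^2))) (r, g) := by
    have : ContinuousAt (fun q : ℝ × ℝ => q.1^2 + (q.2^2 - 1) * Real.log (q.2^2)) (r, g) := by
      fun_prop
    exact this.sqrt
  have hpos : ∀ᶠ q : ℝ × ℝ in nhds (r, g), 0 < q.2 :=
    continuousAt_snd.eventually (lt_mem_nhds hg)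
  by_cases h1 : g = 1
  · subst h1
    by_cases hr : r = 0
    · subst hr
      have hv : calE 0 1 = 1/2 := by
        have := calE_near_zero (r := 0) (g := 1) one_pos
        simp at this
        norm_num
        linarith
      rw [hv, tendsto_iff_dist_tendsto_zero]
      have hb : Tendsto (fun q : ℝ × ℝ =>
          |q.1| + Real.sqrt (q.1^2 + (q.2^2 - 1) * Real.log (q.2^2))) (nhds (0, 1)) (nhds 0) := by
        have := Tendsto.add (continuousAt_fst (p := ((0:ℝ), (1:ℝ)))).abs.tendsto hΔ.tendsto
        simpa [ContinuousAt] using this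
      refine squeeze_zero' (Eventually.of_forall fun _ => dist_nonneg) ?_ hb
      filter_upwards [hpos] with q hq
      exact calE_near_zero hq
    · have hr' : 0 < |r| := abs_pos.mpr hr
      have key : ∀ ρ : ℝ, 0 < ρ → Tendsto (fun q : ℝ × ℝ => calE q.1 q.2) (nhds (ρ, 1))
          (nhds (calE ρ 1)) := by
        intro r hr
        have hlog : ContinuousAt (fun q : ℝ × ℝ => Real.log (q.2^2)) (r, 1) :=
          ContinuousAt.log (by fun_prop) (by simp)
        have hΔ : ContinuousAt (fun q : ℝ × ℝ =>
            Real.sqrt (q.1^2 + (q.2^2 - 1) * Real.log (q.2^2))) (r, 1) := by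
          have : ContinuousAt (fun q : ℝ × ℝ => q.1^2 + (q.2^2 - 1) * Real.log (q.2^2)) (r, 1) := by
            fun_prop
          exact this.sqrt
        have hpos : ∀ᶠ q : ℝ × ℝ in nhds (r, 1), 0 < q.2 :=
          continuousAt_snd.eventually (lt_mem_nhds one_pos)
        have hpos1 : ∀ᶠ q : ℝ × ℝ in nhds (r, 1), 0 < q.1 :=
          continuousAt_fst.eventually (lt_mem_nhds hr)
        have hs : Real.sqrt (r^2) = r := Real.sqrt_sq hr.le
        let F : ℝ × ℝ → ℝ := fun q =>
          1/2 + 1/2 * Phi ((-q.1^2 - q.2^2 * Real.log (q.2^2)) /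
            (q.1 + q.2 * Real.sqrt (q.1^2 + (q.2^2 - 1) * Real.log (q.2^2))))
          - 1/2 * Phi ((q.1^2 - Real.log (q.2^2)) /
            (q.1 * q.2 + Real.sqrt (q.1^2 + (q.2^2 - 1) * Real.log (q.2^2))))
        have hF : ContinuousAt F (r, 1) := by
          have c1 : ContinuousAt (fun q : ℝ × ℝ => (-q.1^2 - q.2^2 * Real.log (q.2^2)) /
            (q.1 + q.2 * Real.sqrt (q.1^2 + (q.2^2 - 1) * Real.log (q.2^2)))) (r, 1) := by
            apply ContinuousAt.div (by fun_prop) (by fun_prop)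
            simp [hs]; linarith
          have c2 : ContinuousAt (fun q : ℝ × ℝ => (q.1^2 - Real.log (q.2^2)) /
            (q.1 * q.2 + Real.sqrt (q.1^2 + (q.2^2 - 1) * Real.log (q.2^2)))) (r, 1) := by
            apply ContinuousAt.div (by fun_prop) (by fun_prop)
            simp [hs]; linarith
          have d1 := hPhi.continuousAt.comp c1
          have d2 := hPhi.continuousAt.comp c2
          exact (continuousAt_const.add (continuousAt_const.mul d1)).sub (continuousAt_const.mul d2)
        have hd : Tendsto (fun q : ℝ × ℝ => calE q.1 q.2 - F q) (nhds (r, 1)) (nhds 0) := by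
          rw [tendsto_zero_iff_abs_tendsto_zero]
          have hb : Tendsto (fun q : ℝ × ℝ =>
              |q.1 - Real.sqrt (q.1^2 + (q.2^2 - 1) * Real.log (q.2^2))|) (nhds (r, 1))
              (nhds 0) := by
            have := ((continuousAt_fst (p := ((r:ℝ), (1:ℝ)))).sub hΔ).abs
            simpa [ContinuousAt, hs] using this
          refine squeeze_zero' (Eventually.of_forall fun _ => abs_nonneg _) ?_ hb
          filter_upwards [hpos, hpos1] with q hq hq1
          exact calE_near_pos hq hq1
        have hv : calE r 1 = F (r, 1) := by
          have := calE_near_pos one_pos hr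
          have h0 : |r - Real.sqrt (r^2 + ((1:ℝ)^2 - 1) * Real.log ((1:ℝ)^2))| = 0 := by
            simp [hs]
          rw [h0] at this
          exact sub_eq_zero.mp (abs_nonpos_iff.mp this)
        rw [hv]
        have := hd.add hF.tendsto
        simpa using this
      have habs : Tendsto (fun q : ℝ × ℝ => (|q.1|, q.2)) (nhds (r, 1)) (nhds (|r|, 1)) := by
        have : Continuous (fun q : ℝ × ℝ => (|q.1|, q.2)) := by fun_prop
        exact this.tendsto (r, 1)
      have := (key |r| hr').comp habs
      simpa [Function.comp_def, calE_abs] using this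
  · have hs : g^2 - 1 ≠ 0 := by
      intro h'
      apply h1
      nlinarith
    have hne : ∀ᶠ q : ℝ × ℝ in nhds (r, g), q.2 ≠ 1 :=
      (continuousAt_snd (p := (r, g))).eventually_ne h1
    have hden : ContinuousAt (fun q : ℝ × ℝ => q.2^2 - 1) (r, g) := by fun_prop
    have T : ∀ f : ℝ × ℝ → ℝ, ContinuousAt f (r, g) →
        ContinuousAt (fun q => (1/2) * Phi (f q / (q.2^2 - 1))) (r, g) := by
      intro f hf
      have := hPhi.continuousAt.comp (hf.div hden hs)
      exact continuousAt_const.mul this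
    let D : ℝ × ℝ → ℝ := fun q => Real.sqrt (q.1^2 + (q.2^2 - 1) * Real.log (q.2^2))
    have hD : ContinuousAt D (r, g) := hΔ
    have hc : ContinuousAt (fun q : ℝ × ℝ => 1/2
      + (1/2) * Phi ((q.1 - q.2 * D q) / (q.2^2 - 1))
      - (1/2) * Phi ((q.1 + q.2 * D q) / (q.2^2 - 1))
      + (1/2) * Phi ((q.1 * q.2 + D q) / (q.2^2 - 1))
      - (1/2) * Phi ((q.1 * q.2 - D q) / (q.2^2 - 1))) (r, g) :=
      (((continuousAt_const.add (T _ (by fun_prop))).sub (T _ (by fun_prop))).add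
        (T _ (by fun_prop))).sub (T _ (by fun_prop))
    have hval : calE r g = (fun q : ℝ × ℝ => 1/2
      + (1/2) * Phi ((q.1 - q.2 * D q) / (q.2^2 - 1))
      - (1/2) * Phi ((q.1 + q.2 * D q) / (q.2^2 - 1))
      + (1/2) * Phi ((q.1 * q.2 + D q) / (q.2^2 - 1))
      - (1/2) * Phi ((q.1 * q.2 - D q) / (q.2^2 - 1))) (r, g) := by
      simp only [calE, if_neg h1, D]
    rw [hval]
    refine hc.tendsto.congr' ?_
    filter_upwards [hne] with q hq
    simp only [calE, if_neg hq, D]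

lemma tendsto_of_frobNorm {p : ℕ} {S : Matrix (Fin p) (Fin p) ℝ}
    {Sh : ℕ → Matrix (Fin p) (Fin p) ℝ}
    (h : Tendsto (fun n => frobNorm (Sh n - S)) atTop (nhds 0)) : Tendsto Sh atTop (nhds S) := by
  refine tendsto_pi_nhds.mpr fun i => tendsto_pi_nhds.mpr fun j => ?_
  rw [tendsto_iff_dist_tendsto_zero]
  refine squeeze_zero (fun _ => dist_nonneg) (fun n => ?_) h
  rw [Real.dist_eq]
  apply Real.abs_le_sqrt
  have a1 := Finset.single_le_sum (f := fun j => ((Sh n - S) i j)^2)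
    (fun j _ => sq_nonneg _) (Finset.mem_univ j)
  have a2 := Finset.single_le_sum (f := fun i => ∑ j, ((Sh n - S) i j)^2)
    (fun i _ => Finset.sum_nonneg fun j _ => sq_nonneg _) (Finset.mem_univ i)
  exact a1.trans a2

lemma Evec_tendsto {p : ℕ} {μ0 μ1 : Fin p → ℝ} {S0 S1 : Matrix (Fin p) (Fin p) ℝ}
    (h0 : S0.PosDef) (h1 : S1.PosDef)
    {m0 m1 : ℕ → Fin p → ℝ} {T0 T1 : ℕ → Matrix (Fin p) (Fin p) ℝ}
    {a : ℕ → Fin p → ℝ} {α : Fin p → ℝ} (hα : α ≠ 0)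
    (hm0 : Tendsto m0 atTop (nhds μ0)) (hm1 : Tendsto m1 atTop (nhds μ1))
    (hT0 : Tendsto T0 atTop (nhds S0)) (hT1 : Tendsto T1 atTop (nhds S1))
    (ha : Tendsto a atTop (nhds α)) :
    Tendsto (fun n => Evec (m0 n) (m1 n) (T0 n) (T1 n) (a n)) atTop
      (nhds (Evec μ0 μ1 S0 S1 α)) := by
  have dot : ∀ {u v : ℕ → Fin p → ℝ} {x y : Fin p → ℝ}, Tendsto u atTop (nhds x) →
      Tendsto v atTop (nhds y) →
      Tendsto (fun n => dotProduct (u n) (v n)) atTop (nhds (dotProduct x y)) := by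
    intro u v x y hu hv
    have : Continuous (fun q : (Fin p → ℝ) × (Fin p → ℝ) => dotProduct q.1 q.2) :=
      continuous_fst.dotProduct continuous_snd
    exact (this.tendsto (x, y)).comp (hu.prodMk_nhds hv)
  have mv : ∀ {M : ℕ → Matrix (Fin p) (Fin p) ℝ} {N : Matrix (Fin p) (Fin p) ℝ},
      Tendsto M atTop (nhds N) →
      Tendsto (fun n => (M n).mulVec (a n)) atTop (nhds (N.mulVec α)) := by
    intro M N hM
    have : Continuous (fun q : (Matrix (Fin p) (Fin p) ℝ) × (Fin p → ℝ) => q.1.mulVec q.2) :=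
      continuous_fst.matrix_mulVec continuous_snd
    exact (this.tendsto (N, α)).comp (hM.prodMk_nhds ha)
  have p0 : 0 < dotProduct α (S0.mulVec α) := by simpa using h0.dotProduct_mulVec_pos hα
  have p1 : 0 < dotProduct α (S1.mulVec α) := by simpa using h1.dotProduct_mulVec_pos hα
  have s0 := (dot ha (mv hT0)).sqrt
  have s1 := (dot ha (mv hT1)).sqrt
  have hs1 : Real.sqrt (dotProduct α (S1.mulVec α)) ≠ 0 := (Real.sqrt_pos.mpr p1).ne'
  have r := ((dot ha hm0).sub (dot ha hm1)).div s1 hs1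
  have g := s0.div s1 hs1
  exact (calE_cont (div_pos (Real.sqrt_pos.mpr p0) (Real.sqrt_pos.mpr p1))).comp
    (r.prodMk_nhds g)

/-- Deterministic consistency: if the estimated parameters converge, E has a unique
minimizing direction ±α₀ on the unit sphere, and α̂ₙ minimizes Êₙ over the unit
sphere, then min(‖α̂ₙ − α₀‖, ‖α̂ₙ + α₀‖) → 0. -/
theorem Evec_argmin_consistency {p : ℕ} (hp : 1 ≤ p)
    (μ0 μ1 : EuclideanSpace ℝ (Fin p)) (S0 S1 : Matrix (Fin p) (Fin p) ℝ)
    (h0 : S0.PosDef) (h1 : S1.PosDef)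
    (μh0 μh1 : ℕ → EuclideanSpace ℝ (Fin p)) (Sh0 Sh1 : ℕ → Matrix (Fin p) (Fin p) ℝ)
    (hpd0 : ∀ n, (Sh0 n).PosDef) (hpd1 : ∀ n, (Sh1 n).PosDef)
    (hμ0 : Tendsto μh0 atTop (nhds μ0)) (hμ1 : Tendsto μh1 atTop (nhds μ1))
    (hS0 : Tendsto (fun n => frobNorm (Sh0 n - S0)) atTop (nhds 0))
    (hS1 : Tendsto (fun n => frobNorm (Sh1 n - S1)) atTop (nhds 0))
    (α0 : EuclideanSpace ℝ (Fin p)) (hα0 : ‖α0‖ = 1)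
    (hα0min : ∀ α : EuclideanSpace ℝ (Fin p), ‖α‖ = 1 →
        Evec μ0 μ1 S0 S1 α0 ≤ Evec μ0 μ1 S0 S1 α)
    (hα0uniq : ∀ α : EuclideanSpace ℝ (Fin p), ‖α‖ = 1 →
        Evec μ0 μ1 S0 S1 α = Evec μ0 μ1 S0 S1 α0 → α = α0 ∨ α = -α0)
    (αh : ℕ → EuclideanSpace ℝ (Fin p)) (hαh : ∀ n, ‖αh n‖ = 1)
    (hαhmin : ∀ n, ∀ α : EuclideanSpace ℝ (Fin p), ‖α‖ = 1 →
        Evec (μh0 n) (μh1 n) (Sh0 n) (Sh1 n) (αh n) ≤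
          Evec (μh0 n) (μh1 n) (Sh0 n) (Sh1 n) α) :
    Tendsto (fun n => min ‖αh n - α0‖ ‖αh n + α0‖) atTop (nhds 0) := by
  have cont : Continuous (fun x : EuclideanSpace ℝ (Fin p) => (x : Fin p → ℝ)) :=
    PiLp.continuous_ofLp 2 _
  have tl : ∀ {u : ℕ → EuclideanSpace ℝ (Fin p)} {x : EuclideanSpace ℝ (Fin p)},
      Tendsto u atTop (nhds x) →
      Tendsto (fun n => (u n : Fin p → ℝ)) atTop (nhds (x : Fin p → ℝ)) :=
    fun h => (cont.tendsto _).comp h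
  have nz : ∀ x : EuclideanSpace ℝ (Fin p), ‖x‖ = 1 → (x : Fin p → ℝ) ≠ 0 := by
    intro x hx h
    have : x = 0 := by
      ext i
      exact congrFun h i
    rw [this, norm_zero] at hx
    exact zero_ne_one hx
  have hT0 := tendsto_of_frobNorm hS0
  have hT1 := tendsto_of_frobNorm hS1
  refine tendsto_of_subseq_tendsto fun ns hns => ?_
  obtain ⟨α, hα, ms, hms, hlim⟩ := (isCompact_sphere (0 : EuclideanSpace ℝ (Fin p)) 1).tendsto_subseq
    (x := fun k => αh (ns k)) (fun k => by simpa using hαh (ns k))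
  have hα1 : ‖α‖ = 1 := by simpa using hα
  refine ⟨ms, ?_⟩
  have hsub : Tendsto (fun k => ns (ms k)) atTop atTop := hns.comp hms.tendsto_atTop
  have L1 := Evec_tendsto h0 h1 (nz α hα1) (tl (hμ0.comp hsub)) (tl (hμ1.comp hsub))
    (hT0.comp hsub) (hT1.comp hsub) (tl hlim)
  have L2 := Evec_tendsto h0 h1 (nz α0 hα0) (tl (hμ0.comp hsub)) (tl (hμ1.comp hsub))
    (hT0.comp hsub) (hT1.comp hsub) (tl (tendsto_const_nhds (x := α0)))
  have hle := le_of_tendsto_of_tendsto' L1 L2 (fun k => hαhmin (ns (ms k)) α0 hα0)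
  have heq := le_antisymm hle (hα0min α hα1)
  have hfin := ((hlim.sub_const α0).norm).min ((hlim.add_const α0).norm)
  have hz : min ‖α - α0‖ ‖α + α0‖ = 0 := by
    rcases hα0uniq α hα1 heq with h | h
    · rw [h]; simp
    · rw [h]; simp
  rw [hz] at hfin
  exact hfin
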